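/- Assume: the items {1,…,m+1} are partitioned into goods G, chores C, and nonnegatively-valued items G_0; item m+1 satisfies v̄_i(m+1) = λ/2 for all agents i, for some λ > 0; every good j ∈ G satisfies v̄_i(j) ≥ λ/2 for all agents i; every chore j ∈ C satisfies v̄_i(j) ≤ −λ/2 for all agents i; m ≥ 2; V = max_{i,j} |v̄_i(j)| > 0; and η = λ/(2 m n V). Then there exists a point w* ∈ Δ_{n−1} such that for every agent i ∈ [n] there is an allocation A^{(i)} maximizing Σ_k (w*_k + η) v̄_k(A^{(i)}_k) over all allocations and satisfying p(A^{(i)}_i) ≥ p(A^{(i)}_j) for all j ∈ [n], where p_j = max_k (w*_k + η) v̄_k(j). -/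

import Mathlib

open Finset

/-- Value of a bundle under an additive valuation. -/
def bval {α : Type*} (u : α → ℝ) (S : Finset α) : ℝ := ∑ j ∈ S, u j

/-- An allocation: every item belongs to exactly one agent's bundle. -/
def IsAlloc {n : ℕ} {I : Type*} (A : Fin n → Finset I) : Prop :=
  ∀ j : I, ∃! i : Fin n, j ∈ A i

/-!
If `g` is Lipschitz and vanishes outside `U`, then for small `t` the map `id + t g` is a
bi-Lipschitz bijection of `U`, so the integral of `det (1 + t Dg)` over `U` is the volume of `U`.
This integral is a polynomial in `t`, hence it equals the volume at `t = 1` too. A Lipschitz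
retraction of a ball onto its sphere would make the determinant vanish almost everywhere; that there
is none gives Brouwer's theorem, and through it the KKM lemma.

In the application, handing each item to an agent attaining its price maximizes the weighted
welfare. If the agent holding the most expensive bundle had weight zero, every item in that bundle
would be worth at most `η V`, whereas some agent has weight at least `1 / n`, so the item valued
positively by all costs more than `η V` times the number of other items, and the bundle containing
it would be more expensive still. Thus the weight vectors for which agent `i` can hold a top bundle
form a KKM cover of the simplex by closed sets.
-/

section Degree

open MeasureTheory Topology
open scoped NNReal

lemma not_surjective_of_hasFDerivAt_of_norm_eq {E F : Type*} [NormedAddCommGroup E]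
    [NormedSpace ℝ E] [NormedAddCommGroup F] [NormedSpace ℝ F] {r : E → F} {r' : E →L[ℝ] F}
    {x : E} (hr : HasFDerivAt r r' x) (hx : r x ≠ 0) (hnorm : ∀ᶠ y in 𝓝 x, ‖r y‖ = ‖r x‖) :
    ¬ Function.Surjective r' := by
  intro hsurj
  obtain ⟨ℓ, hℓ, hℓx⟩ := exists_dual_vector ℝ (r x) (norm_ne_zero_iff.2 hx)
  have hmax : IsLocalMax (fun y ↦ ℓ (r y)) x := hnorm.mono fun y hy ↦ by
    simpa [hℓx, hℓ, hy] using (le_abs_self _).trans (ℓ.le_opNorm (r y))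
  have hzero := hmax.hasFDerivAt_eq_zero (ℓ.hasFDerivAt.comp x hr)
  obtain ⟨v, hv⟩ := hsurj (r x)
  have := DFunLike.congr_fun hzero v
  simp [hv, hℓx, hx] at this

lemma bijective_id_add_of_lipschitzWith {F : Type*} [NormedAddCommGroup F] [CompleteSpace F]
    {g : F → F} {K : ℝ≥0} (hg : LipschitzWith K g) (hK : K < 1) :
    Function.Bijective fun x ↦ x + g x := by
  constructor
  · have hanti := AntilipschitzWith.id.add_lipschitzWith hg (by simpa using hK)
    exact hanti.injective
  · intro y
    have hcontr : ContractingWith K fun x ↦ y - g x :=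
      ⟨hK, by simpa using (LipschitzWith.const y).sub hg⟩
    exact ⟨_, (eq_sub_iff_add_eq.1 hcontr.fixedPoint_isFixedPt.symm)⟩

lemma image_eq_of_bijective_of_forall_notMem {α : Type*} {h : α → α} (hh : Function.Bijective h)
    {U : Set α} (hU : ∀ x ∉ U, h x = x) : h '' U = U := by
  have : h '' Uᶜ = Uᶜ := Set.image_congr hU |>.trans (Set.image_id' _)
  rwa [Set.image_compl_eq hh, compl_inj_iff] at this

variable {E : Type*} [NormedAddCommGroup E] [NormedSpace ℝ E] [FiniteDimensional ℝ E]

lemma det_one_add_smul_eq_sum_basis (A : E →L[ℝ] E) {s : Finset ℝ}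
    (hs : Module.finrank ℝ E < #s) (t : ℝ) :
    (1 + t • A).det = ∑ τ ∈ s, (Lagrange.basis s id τ).eval t * (1 + τ • A).det := by
  let b := Module.finBasis ℝ E
  let p : Polynomial ℝ := Matrix.det
    ((Polynomial.X : Polynomial ℝ) • (LinearMap.toMatrix b b A).map Polynomial.C
      + (1 : Matrix _ _ ℝ).map Polynomial.C)
  have eval_p (τ : ℝ) : p.eval τ = (1 + τ • A).det := by
    change _ = LinearMap.det ((1 + τ • A : E →L[ℝ] E) : E →ₗ[ℝ] E)
    rw [← LinearMap.det_toMatrix b, ← Polynomial.coe_evalRingHom, RingHom.map_det]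
    congr 1
    ext i j
    simp [LinearMap.toMatrix_apply, Matrix.one_apply, Finsupp.single_apply, apply_ite,
      eq_comm (a := i), add_comm, mul_comm τ]
  have degree_p : p.degree < #s := by
    refine Polynomial.degree_le_natDegree.trans_lt (Nat.cast_lt.2 ?_)
    refine (Polynomial.natDegree_det_X_add_C_le _ _).trans_lt ?_
    simpa using hs
  rw [← eval_p, Lagrange.eq_interpolate Function.injective_id.injOn degree_p]
  simp [Lagrange.interpolate_apply, Polynomial.eval_finsetSum, eval_p, mul_comm]

lemma det_one_add_pos_of_norm_lt_one {A : E →L[ℝ] E} (hA : ‖A‖ < 1) : 0 < (1 + A).det := by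
  have det_ne_zero (t : ℝ) (ht : t ∈ Set.Icc (0 : ℝ) 1) : (1 + t • A).det ≠ 0 := by
    have := FiniteDimensional.complete ℝ E
    have norm_lt : ‖-(t • A)‖ < 1 := by
      rw [norm_neg, norm_smul, Real.norm_of_nonneg ht.1]
      exact (mul_le_of_le_one_left (norm_nonneg A) ht.2).trans_lt hA
    have hunit := isUnit_one_sub_of_norm_lt_one norm_lt
    rw [sub_neg_eq_add] at hunit
    exact (LinearMap.isUnit_det _ (hunit.map ContinuousLinearMap.toLinearMapRingHom)).ne_zero
  have det_continuous : Continuous fun t : ℝ ↦ (1 + t • A).det :=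
    ContinuousLinearMap.continuous_det.comp (by fun_prop)
  by_contra! hneg
  obtain ⟨t, ht, h0⟩ := intermediate_value_Icc' zero_le_one
    (f := fun t : ℝ ↦ (1 + t • A).det) det_continuous.continuousOn
    ⟨by simpa using hneg, by simp [ContinuousLinearMap.det]⟩
  exact det_ne_zero t ht h0

variable [MeasurableSpace E] [BorelSpace E] (μ : Measure E) [μ.IsAddHaarMeasure]

lemma addHaar_image_eq_zero_of_lipschitzWith {h : E → E} {K : ℝ≥0} (hh : LipschitzWith K h)
    {s : Set E} (hs : μ s = 0) : μ (h '' s) = 0 := by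
  let ν : Measure E := μH[Module.finrank ℝ E]
  have hνs : ν s = 0 := Measure.absolutelyContinuous_isAddHaarMeasure ν μ hs
  refine Measure.absolutelyContinuous_isAddHaarMeasure μ ν (le_antisymm ?_ zero_le)
  simpa [ν, hνs] using hh.hausdorffMeasure_image_le (Nat.cast_nonneg (Module.finrank ℝ E)) s

lemma integral_det_one_add_fderiv_of_lipschitzWith_lt_one {g : E → E} {K : ℝ≥0}
    (hg : LipschitzWith K g) (hK : K < 1) {U : Set E} (hU : MeasurableSet U) (hμU : μ U ≠ ⊤)
    (hgU : ∀ x ∉ U, g x = 0) :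
    IntegrableOn (fun x ↦ (1 + fderiv ℝ g x).det) U μ ∧
      ∫ x in U, (1 + fderiv ℝ g x).det ∂μ = μ.real U := by
  let h : E → E := fun x ↦ x + g x
  let D : Set E := U ∩ {x | DifferentiableAt ℝ g x}
  have hD : MeasurableSet D := hU.inter (measurableSet_of_differentiableAt ℝ g)
  have hDU : D =ᵐ[μ] U := hg.ae_differentiableAt.mono fun x hx ↦
    eq_iff_iff.2 (and_iff_left hx)
  have h_bij : Function.Bijective h := bijective_id_add_of_lipschitzWith hg hK
  have h_lip : LipschitzWith (1 + K) h := LipschitzWith.id.add hg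
  have h_image_D : h '' D =ᵐ[μ] U := by
    have h_image_U : h '' U = U :=
      image_eq_of_bijective_of_forall_notMem h_bij fun x hx ↦ by simp [h, hgU x hx]
    have h_image_null : μ (h '' (U \ D)) = 0 :=
      addHaar_image_eq_zero_of_lipschitzWith μ h_lip (ae_le_set.1 hDU.symm.le)
    rw [Set.image_sdiff h_bij.injective, h_image_U] at h_image_null
    refine Filter.EventuallyLE.antisymm ?_ (ae_le_set.2 h_image_null)
    exact ((Set.image_mono Set.inter_subset_left).trans h_image_U.subset).eventuallyLE
  have h_deriv (x) (hx : x ∈ D) : HasFDerivWithinAt h (1 + fderiv ℝ g x) D x :=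
    ((hasFDerivAt_id x).add hx.2.hasFDerivAt).hasFDerivWithinAt
  have abs_det (x : E) : |(1 + fderiv ℝ g x).det| = (1 + fderiv ℝ g x).det :=
    abs_of_pos <| det_one_add_pos_of_norm_lt_one <|
      (norm_fderiv_le_of_lipschitz ℝ hg).trans_lt (by exact_mod_cast hK)
  have h_inj : Set.InjOn h D := h_bij.injective.injOn
  constructor
  · have := (integrableOn_image_iff_integrableOn_abs_det_fderiv_smul μ hD h_deriv h_inj
      fun _ ↦ (1 : ℝ)).1 ((integrableOn_congr_set_ae h_image_D).2 (integrableOn_const hμU))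
    simpa [abs_det, integrableOn_congr_set_ae hDU] using this
  · have := integral_image_eq_integral_abs_det_fderiv_smul μ hD h_deriv h_inj fun _ ↦ (1 : ℝ)
    rw [setIntegral_congr_set h_image_D, setIntegral_congr_set hDU] at this
    simpa [abs_det] using this.symm

lemma integral_det_one_add_fderiv {g : E → E} {K : ℝ≥0} (hg : LipschitzWith K g)
    {U : Set E} (hU : MeasurableSet U) (hμU : μ U ≠ ⊤) (hgU : ∀ x ∉ U, g x = 0) :
    ∫ x in U, (1 + fderiv ℝ g x).det ∂μ = μ.real U := by
  obtain ⟨s, hs, hcard⟩ : ∃ s : Finset ℝ, (s : Set ℝ) ⊆ Set.Ioo 0 (1 / (K + 1 : ℝ)) ∧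
      #s = Module.finrank ℝ E + 1 :=
    (Set.Ioo_infinite (by positivity)).exists_subset_card_eq _
  have small (τ) (hτ : τ ∈ s) := by
    have hτK : ‖τ‖₊ * K < 1 := by
      have hτ := hs hτ
      rw [← NNReal.coe_lt_coe, NNReal.coe_mul, coe_nnnorm, Real.norm_of_nonneg hτ.1.le]
      calc τ * K ≤ τ * (K + 1) := by gcongr <;> linarith [hτ.1]
        _ < 1 := (lt_div_iff₀ (by positivity)).1 hτ.2
    exact integral_det_one_add_fderiv_of_lipschitzWith_lt_one (g := τ • g) μ
      ((lipschitzWith_smul τ).comp hg) hτK hU hμU fun x hx ↦ by simp [hgU x hx]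
  have hfd (τ : ℝ) (x : E) : fderiv ℝ (τ • g) x = τ • fderiv ℝ g x :=
    congrFun (fderiv_const_smul_field τ) x
  simp only [hfd] at small
  calc
    ∫ x in U, (1 + fderiv ℝ g x).det ∂μ
      = ∫ x in U, ∑ τ ∈ s, (Lagrange.basis s id τ).eval 1 * (1 + τ • fderiv ℝ g x).det ∂μ := by
        have hlt : Module.finrank ℝ E < #s := by omega
        simp_rw [← det_one_add_smul_eq_sum_basis _ hlt, one_smul]
    _ = ∑ τ ∈ s, (Lagrange.basis s id τ).eval 1 * μ.real U := by
        rw [integral_finsetSum _ fun τ hτ ↦ (small τ hτ).1.const_mul _]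
        refine sum_congr rfl fun τ hτ ↦ ?_
        rw [integral_const_mul, (small τ hτ).2]
    _ = μ.real U := by
        rw [← sum_mul, ← Polynomial.eval_finsetSum,
          Lagrange.sum_basis Function.injective_id.injOn (card_pos.1 (by omega)),
          Polynomial.eval_one, one_mul]

end Degree

section RadialPush

open scoped NNReal
open NormedSpace (normalize)

variable {F : Type*} [NormedAddCommGroup F] [NormedSpace ℝ F]

/-- The radial push onto the sphere of radius `R`: nonzero vectors of norm less than `R` are moved
along their ray onto the sphere, the others stay fixed. It turns a map that avoids a neighbourhood
of `0` into one that avoids the open ball. The junk value `normalize 0 = 0` makes `0` a fixed point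
as well. -/
noncomputable def radialPush (R : ℝ) (y : F) : F := y + max (R - ‖y‖) 0 • normalize y

lemma norm_normalize_le_one (y : F) : ‖normalize y‖ ≤ 1 := by
  by_cases hy : y = 0
  · simp [hy]
  · exact (NormedSpace.norm_normalize hy).le

lemma norm_normalize_sub_normalize_le {c : ℝ} (hc : 0 < c) (y : F) {z : F} (hz : c ≤ ‖z‖) :
    ‖normalize y - normalize z‖ ≤ 2 / c * ‖y - z‖ := by
  have hsplit : ‖z‖ • (normalize y - normalize z) = (‖z‖ - ‖y‖) • normalize y + (y - z) := by
    rw [smul_sub, sub_smul, NormedSpace.norm_smul_normalize, NormedSpace.norm_smul_normalize]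
    abel
  have hbound : c * ‖normalize y - normalize z‖ ≤ 2 * ‖y - z‖ := calc
    c * ‖normalize y - normalize z‖ ≤ ‖z‖ * ‖normalize y - normalize z‖ := by gcongr
    _ = ‖(‖z‖ - ‖y‖) • normalize y + (y - z)‖ := by rw [← hsplit, norm_smul, norm_norm]
    _ ≤ |‖z‖ - ‖y‖| * ‖normalize y‖ + ‖y - z‖ := by
      simpa only [norm_smul, Real.norm_eq_abs] using
        norm_add_le ((‖z‖ - ‖y‖) • normalize y) (y - z)
    _ ≤ ‖y - z‖ * 1 + ‖y - z‖ := by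
      gcongr
      · rw [norm_sub_rev]
        exact abs_norm_sub_norm_le z y
      · exact norm_normalize_le_one y
    _ = 2 * ‖y - z‖ := by ring
  rw [div_mul_eq_mul_div]
  exact (le_div_iff₀' hc).2 hbound

lemma norm_radialPush (R : ℝ) {y : F} (hy : y ≠ 0) : ‖radialPush R y‖ = max R ‖y‖ := by
  have hscale : radialPush R y = max R ‖y‖ • normalize y := by
    nth_rw 1 [radialPush, ← NormedSpace.norm_smul_normalize y]
    rw [← add_smul, add_max, add_sub_cancel, add_zero]
  rw [hscale, norm_smul, NormedSpace.norm_normalize hy, mul_one, Real.norm_of_nonneg]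
  exact (norm_nonneg y).trans (le_max_right _ _)

lemma radialPush_eq_self {R : ℝ} {y : F} (hy : R ≤ ‖y‖) : radialPush R y = y := by
  simp [radialPush, hy]

lemma lipschitzOnWith_radialPush {R c : ℝ≥0} (hc : 0 < c) :
    LipschitzOnWith (2 + 2 * R / c) (radialPush R) {y : F | c ≤ ‖y‖} := by
  refine LipschitzOnWith.of_dist_le_mul fun y _ z hz ↦ ?_
  let α (y : F) : ℝ := max (R - ‖y‖) 0
  have hα_lip : |α y - α z| ≤ ‖y - z‖ := calc
    |α y - α z| ≤ |(R - ‖y‖) - (R - ‖z‖)| := abs_max_sub_max_le_abs _ _ _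
    _ = |‖y‖ - ‖z‖| := by rw [sub_sub_sub_cancel_left, abs_sub_comm]
    _ ≤ ‖y - z‖ := abs_norm_sub_norm_le y z
  have hα_nonneg : 0 ≤ α z := le_max_right _ _
  have hα_le : α z ≤ R := max_le (sub_le_self _ (norm_nonneg z)) R.2
  have hsplit : radialPush R y - radialPush R z
      = (y - z) + (α y - α z) • normalize y + α z • (normalize y - normalize z) := by
    simp only [radialPush, α]
    module
  rw [dist_eq_norm, dist_eq_norm, hsplit]
  calc ‖(y - z) + (α y - α z) • normalize y + α z • (normalize y - normalize z)‖
    _ ≤ ‖y - z‖ + |α y - α z| * ‖normalize y‖ + α z * ‖normalize y - normalize z‖ := by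
      refine norm_add₃_le.trans_eq ?_
      rw [norm_smul, norm_smul, Real.norm_eq_abs, Real.norm_of_nonneg hα_nonneg]
    _ ≤ ‖y - z‖ + ‖y - z‖ * 1 + R * (2 / c * ‖y - z‖) := by
      gcongr
      · exact norm_normalize_le_one y
      · exact norm_normalize_sub_normalize_le (by exact_mod_cast hc) y hz
    _ = (2 + 2 * R / c : ℝ≥0) * ‖y - z‖ := by
      push_cast
      ring

end RadialPush

section Brouwer

open MeasureTheory Metric Topology
open scoped NNReal

variable {E : Type*} [NormedAddCommGroup E] [NormedSpace ℝ E] [FiniteDimensional ℝ E]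

lemma exists_mem_ball_norm_add_ne {g : E → E} {K : ℝ≥0} (hg : LipschitzWith K g) {R : ℝ}
    (hR : 0 < R) (hgR : ∀ x ∉ ball (0 : E) R, g x = 0) :
    ∃ x ∈ ball (0 : E) R, ‖x + g x‖ ≠ R := by
  borelize E
  let μ : Measure E := Measure.addHaar
  by_contra! hnorm
  have det_eq_zero (x) (hx : x ∈ ball (0 : E) R) (hdiff : DifferentiableAt ℝ g x) :
      (1 + fderiv ℝ g x).det = 0 := by
    by_contra hdet
    have hsurj : Function.Surjective ((1 + fderiv ℝ g x : E →L[ℝ] E) : E → E) :=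
      ((1 + fderiv ℝ g x).toContinuousLinearEquivOfDetNeZero hdet).surjective
    refine not_surjective_of_hasFDerivAt_of_norm_eq ((hasFDerivAt_id x).add hdiff.hasFDerivAt)
      ?_ ?_ hsurj
    · exact norm_ne_zero_iff.1 ((hnorm x hx).trans_ne hR.ne')
    · filter_upwards [isOpen_ball.mem_nhds hx] with y hy
      exact (hnorm y hy).trans (hnorm x hx).symm
  have hint := integral_det_one_add_fderiv μ hg measurableSet_ball measure_ball_lt_top.ne hgR
  rw [setIntegral_eq_zero_of_ae_eq_zero (hg.ae_differentiableAt.mono fun x hdiff hx ↦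
    det_eq_zero x hx hdiff)] at hint
  exact (measureReal_ne_zero_iff measure_ball_lt_top.ne).2 (measure_ball_pos μ 0 hR).ne' hint.symm

lemma exists_add_eq_zero_of_lipschitzWith {g : E → E} {K : ℝ≥0} (hg : LipschitzWith K g)
    (hsupp : HasCompactSupport g) : ∃ x, x + g x = 0 := by
  by_contra! hne
  let h : E → E := fun x ↦ x + g x
  have hh : LipschitzWith (1 + K) h := LipschitzWith.id.add hg
  have hout (x) (hx : x ∉ tsupport g) : h x = x := by
    simp [h, image_eq_zero_of_notMem_tsupport hx]
  obtain ⟨R, hR, hRbound⟩ :=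
    (hsupp.isCompact.union (hsupp.isCompact.image hh.continuous)).isBounded.exists_pos_norm_lt
  have h_outer (x) (hx : x ∉ ball (0 : E) R) : h x = x :=
    hout x fun hmem ↦ hx (by simpa using hRbound x (.inl hmem))
  have h_ball (x) (hx : x ∈ ball (0 : E) R) : ‖h x‖ ≤ R := by
    by_cases hmem : x ∈ tsupport g
    · exact (hRbound _ (.inr ⟨x, hmem, rfl⟩)).le
    · simpa [hout x hmem] using (mem_ball_zero_iff.1 hx).le
  obtain ⟨c, hc, hch⟩ : ∃ c : ℝ≥0, 0 < c ∧ ∀ x, c ≤ ‖h x‖ := by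
    obtain ⟨c, hc, hcball⟩ := (isCompact_closedBall (0 : E) R).exists_forall_le'
      hh.continuous.norm.continuousOn fun x _ ↦ norm_pos_iff.2 (hne x)
    lift c to ℝ≥0 using hc.le
    lift R to ℝ≥0 using hR.le
    refine ⟨min c R, lt_min (by exact_mod_cast hc) (by exact_mod_cast hR), fun x ↦ ?_⟩
    by_cases hx : x ∈ ball (0 : E) R
    · exact (min_le_left _ _).trans (hcball x (ball_subset_closedBall hx))
    · rw [h_outer x hx]
      exact (min_le_right _ _).trans (by simpa using hx)
  lift R to ℝ≥0 using hR.le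
  have hpush : LipschitzWith ((2 + 2 * R / c) * (1 + K)) (radialPush R ∘ h) :=
    lipschitzOnWith_univ.1 <|
      (lipschitzOnWith_radialPush hc).comp hh.lipschitzOnWith fun x _ ↦ hch x
  obtain ⟨x, hx, hxR⟩ := exists_mem_ball_norm_add_ne (hpush.sub LipschitzWith.id) hR fun x hx ↦ by
    have hxR : R ≤ ‖x‖ := by simpa using hx
    simp [h_outer x hx, radialPush_eq_self hxR]
  refine hxR ?_
  rw [Function.comp_apply, id, add_sub_cancel, norm_radialPush _ (hne x),
    max_eq_left (h_ball x hx)]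

lemma exists_isFixedPt_of_continuous_of_norm_le {f : E → E} (hf : Continuous f) {C : ℝ}
    (hC : ∀ x, ‖f x‖ ≤ C) : ∃ x, Function.IsFixedPt f x := by
  by_contra! hne
  have hC0 : 0 ≤ C := (norm_nonneg _).trans (hC 0)
  let χ : ContDiffBump (0 : E) := ⟨C + 1, C + 2, by positivity, by linarith⟩
  let g : E → E := fun x ↦ -(χ x • f x)
  have g_continuous : Continuous g := (χ.continuous.smul hf).neg
  have g_compact : HasCompactSupport g := (χ.hasCompactSupport.smul_right (f' := f)).neg
  have add_g_ne_zero (x : E) : x + g x ≠ 0 := by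
    intro hzero
    have hx : χ x • f x = x := (add_neg_eq_zero.1 hzero).symm
    have hnorm : ‖x‖ ≤ C := calc
      ‖x‖ = χ x * ‖f x‖ := by rw [← Real.norm_of_nonneg χ.nonneg, ← norm_smul, hx]
      _ ≤ 1 * C := mul_le_mul χ.le_one (hC x) (norm_nonneg _) zero_le_one
      _ = C := one_mul C
    have hone : χ x = 1 := χ.one_of_mem_closedBall (by simpa [χ] using hnorm.trans (by linarith))
    exact hne x (by simpa only [hone, one_smul] using hx : f x = x)
  obtain ⟨g', g'_contDiff, hg', hsupp⟩ := g_continuous.exists_contDiff_approx 1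
    (ε := fun x ↦ ‖x + g x‖) (by fun_prop) fun x ↦ norm_pos_iff.2 (add_g_ne_zero x)
  have g'_compact : HasCompactSupport g' := g_compact.mono hsupp
  obtain ⟨K, hK⟩ := g'_contDiff.lipschitzWith_of_hasCompactSupport g'_compact one_ne_zero
  obtain ⟨x, hx⟩ := exists_add_eq_zero_of_lipschitzWith hK g'_compact
  refine (hg' x).ne ?_
  rw [dist_eq_norm', ← add_sub_add_left_eq_sub _ _ x, hx, sub_zero]

theorem brouwer_exists_isFixedPt {s : Set E} (hs : Convex ℝ s) (hcompact : IsCompact s)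
    (hne : s.Nonempty) {f : E → E} (hf : ContinuousOn f s) (hmaps : Set.MapsTo f s s) :
    ∃ x ∈ s, Function.IsFixedPt f x := by
  have approx (ε : ℝ) (hε : 0 < ε) : ∃ x ∈ s, ‖x - f x‖ < ε := by
    let t (x : E) : Set E := s ∩ ⋂ _ : x ∈ s, ball (f x) ε
    obtain ⟨g, hg⟩ : ∃ g : C(E, E), ∀ x, g x ∈ t x := by
      refine exists_continuous_forall_mem_convex_of_local_const
        (fun x ↦ hs.inter (convex_iInter fun _ ↦ convex_ball (f x) ε)) fun x ↦ ?_
      by_cases hx : x ∈ s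
      · refine ⟨f x, ?_⟩
        filter_upwards [eventually_nhdsWithin_iff.1 ((hf x hx).eventually (ball_mem_nhds _ hε))]
          with y hy
        exact ⟨hmaps hx, Set.mem_iInter.2 fun hys ↦ mem_ball_comm.1 (hy hys)⟩
      · obtain ⟨c, hc⟩ := hne
        refine ⟨c, ?_⟩
        filter_upwards [hcompact.isClosed.isOpen_compl.mem_nhds hx] with y hy
        exact ⟨hc, Set.mem_iInter.2 fun hys ↦ (hy hys).elim⟩
    obtain ⟨C, hC⟩ := hcompact.isBounded.exists_norm_le
    obtain ⟨x, hx⟩ := exists_isFixedPt_of_continuous_of_norm_le g.continuous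
      fun x ↦ hC _ (hg x).1
    have hxs : x ∈ s := hx ▸ (hg x).1
    exact ⟨x, hxs, by simpa [hx.eq, dist_eq_norm] using Set.mem_iInter.1 (hg x).2 hxs⟩
  obtain ⟨x, hx, hmin⟩ := hcompact.exists_isMinOn hne (continuousOn_id.sub hf).norm
  refine ⟨x, hx, (sub_eq_zero.1 (norm_le_zero_iff.1 (le_of_forall_pos_lt_add fun ε hε ↦ ?_))).symm⟩
  obtain ⟨y, hy, hyε⟩ := approx ε hε
  exact (hmin hy).trans_lt (by simpa using hyε)

end Brouwer

section KKM

open Metric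

variable {ι : Type*} [Fintype ι] [Nonempty ι]

theorem kkm_exists_mem_stdSimplex_forall_mem {C : ι → Set (ι → ℝ)}
    (hC : ∀ i, IsClosed (C i))
    (hcover : ∀ w ∈ stdSimplex ℝ ι, ∃ i, 0 < w i ∧ w ∈ C i) :
    ∃ w ∈ stdSimplex ℝ ι, ∀ i, w ∈ C i := by
  classical
  let d (w : ι → ℝ) (i : ι) : ℝ := infDist w (C i)
  have d_nonneg (w i) : 0 ≤ d w i := infDist_nonneg
  have d_continuous : Continuous d := continuous_pi fun i ↦ continuous_infDist_pt (C i)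
  have total_pos (w) : 0 < 1 + ∑ i, d w i :=
    add_pos_of_pos_of_nonneg one_pos (sum_nonneg fun i _ ↦ d_nonneg w i)
  have C_nonempty (i) : (C i).Nonempty := by
    obtain ⟨j, hj, hmem⟩ := hcover _ (single_mem_stdSimplex ℝ i)
    obtain rfl : j = i := by
      by_contra hne
      simp [hne] at hj
    exact ⟨_, hmem⟩
  obtain ⟨w, hw, hfix⟩ := brouwer_exists_isFixedPt (convex_stdSimplex ℝ ι)
    (isCompact_stdSimplex ℝ ι) ⟨_, single_mem_stdSimplex ℝ (Classical.arbitrary ι)⟩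
    (f := fun w ↦ (1 + ∑ i, d w i)⁻¹ • (w + d w))
    (Continuous.continuousOn <| by fun_prop (disch := exact fun w ↦ (total_pos w).ne'))
    fun w hw ↦ ⟨fun i ↦ smul_nonneg (inv_nonneg.2 (total_pos w).le)
      (add_nonneg (hw.1 i) (d_nonneg w i)), by
        simp [← mul_sum, sum_add_distrib, hw.2, (total_pos w).ne']⟩
  have hfix (i) : w i * ∑ j, d w j = d w i := by
    have := congrFun hfix.eq i
    rw [Pi.smul_apply, smul_eq_mul, inv_mul_eq_iff_eq_mul₀ (total_pos w).ne', Pi.add_apply] at this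
    linarith
  obtain ⟨i, hi, hmem⟩ := hcover w hw
  have sum_eq_zero : ∑ j, d w j = 0 := by
    simpa [d, infDist_zero_of_mem hmem, hi.ne'] using hfix i
  exact ⟨w, hw, fun j ↦ ((hC j).mem_iff_infDist_zero (C_nonempty j)).2 <|
    (hfix j).symm.trans (by rw [sum_eq_zero, mul_zero])⟩

end KKM

section FairDivision

variable {n : ℕ} {I : Type*}

/-- The `ω`-weighted utilitarian welfare of an assignment of bundles. -/
def welfare (ω : Fin n → ℝ) (v : Fin n → I → ℝ) (A : Fin n → Finset I) : ℝ :=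
  ∑ k, ω k * bval (v k) (A k)

/-- The price of an item: the largest weighted value any agent has for it. With agents present, the
sum of all prices is the largest attainable weighted welfare. -/
noncomputable def price (ω : Fin n → ℝ) (v : Fin n → I → ℝ) (t : I) : ℝ := ⨆ k, ω k * v k t

/-- Agent `i` holds a highest-priced bundle in some allocation of maximal `ω`-weighted welfare. The
set of weights with this property is the `i`-th set of the KKM cover. -/
def HoldsTopBundle (ω : Fin n → ℝ) (v : Fin n → I → ℝ) (i : Fin n) : Prop :=
  ∃ A : Fin n → Finset I, IsAlloc A ∧ (∀ B, IsAlloc B → welfare ω v B ≤ welfare ω v A) ∧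
    ∀ j, bval (price ω v) (A j) ≤ bval (price ω v) (A i)

lemma le_price (ω : Fin n → ℝ) (v : Fin n → I → ℝ) (k : Fin n) (t : I) :
    ω k * v k t ≤ price ω v t :=
  le_ciSup (Set.finite_range fun k ↦ ω k * v k t).bddAbove k

lemma exists_eq_price [NeZero n] (ω : Fin n → ℝ) (v : Fin n → I → ℝ) (t : I) :
    ∃ k, ω k * v k t = price ω v t :=
  exists_eq_ciSup_of_finite

lemma continuous_price [NeZero n] (v : Fin n → I → ℝ) (t : I) :
    Continuous fun ω ↦ price ω v t := by
  simp only [price, ← sup'_univ_eq_ciSup]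
  exact Continuous.finset_sup'_apply _ fun k _ ↦ by fun_prop

lemma one_div_add_mul_le_price [NeZero n] {w : Fin n → ℝ} (hw : w ∈ stdSimplex ℝ (Fin n))
    {η c : ℝ} (hη : 0 ≤ η) (hc : 0 ≤ c) {v : Fin n → I → ℝ} {t : I} (ht : ∀ k, c ≤ v k t) :
    (1 / n + η) * c ≤ price (fun k ↦ w k + η) v t := by
  obtain ⟨k, -, hk⟩ : ∃ k ∈ univ, (1 / n : ℝ) ≤ w k :=
    exists_le_of_sum_le univ_nonempty (by simp [hw.2, NeZero.ne n])
  calc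
    (1 / n + η) * c ≤ (w k + η) * v k t := by
      have := hw.1 k
      gcongr
      exact ht k
    _ ≤ price (fun k ↦ w k + η) v t := le_price (fun k ↦ w k + η) v k t

lemma continuous_welfare (v : Fin n → I → ℝ) (A : Fin n → Finset I) :
    Continuous fun ω ↦ welfare ω v A := by
  unfold welfare
  fun_prop

lemma isClosed_setOf_holdsTopBundle [NeZero n] [Finite I] (v : Fin n → I → ℝ) (i : Fin n) :
    IsClosed {ω | HoldsTopBundle ω v i} := by
  have hbval (S : Finset I) : Continuous fun ω ↦ bval (price ω v) S :=
    continuous_finsetSum S fun t _ ↦ continuous_price v t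
  simp only [HoldsTopBundle, Set.ofPred_exists, Set.ofPred_and, Set.ofPred_forall]
  exact isClosed_iUnion_of_finite fun A ↦ isClosed_const.inter <|
    (isClosed_iInter fun B ↦ isClosed_iInter fun _ ↦
      isClosed_le (continuous_welfare v B) (continuous_welfare v A)).inter <|
    isClosed_iInter fun j ↦ isClosed_le (hbval (A j)) (hbval (A i))

lemma exists_isAlloc_forall_eq_price [NeZero n] [Finite I] (ω : Fin n → ℝ) (v : Fin n → I → ℝ) :
    ∃ A : Fin n → Finset I, IsAlloc A ∧ ∀ k, ∀ t ∈ A k, ω k * v k t = price ω v t := by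
  cases nonempty_fintype I
  choose owner howner using exists_eq_price ω v
  refine ⟨fun k ↦ {t | owner t = k}, fun t ↦ ⟨owner t, by simp, by simp [eq_comm]⟩, fun k t ht ↦ ?_⟩
  obtain rfl : owner t = k := by simpa using ht
  exact howner t

lemma IsAlloc.sum_bval_eq_sum [Fintype I] {A : Fin n → Finset I} (hA : IsAlloc A) (u : I → ℝ) :
    ∑ k, bval u (A k) = ∑ t, u t := by
  choose owner mem_owner eq_owner using hA
  have hfiber (k) : A k = univ.filter fun t ↦ owner t = k := by
    ext t
    simpa using ⟨fun h ↦ (eq_owner t k h).symm, fun h ↦ h ▸ mem_owner t⟩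
  simp only [bval, hfiber, sum_fiberwise]

lemma IsAlloc.welfare_le_sum_price [Fintype I] {A : Fin n → Finset I} (hA : IsAlloc A)
    (ω : Fin n → ℝ) (v : Fin n → I → ℝ) : welfare ω v A ≤ ∑ t, price ω v t := by
  rw [← hA.sum_bval_eq_sum]
  simp only [welfare, bval, mul_sum]
  exact sum_le_sum fun k _ ↦ sum_le_sum fun t _ ↦ le_price ω v k t

lemma IsAlloc.welfare_eq_sum_price [Fintype I] {A : Fin n → Finset I} (hA : IsAlloc A)
    {ω : Fin n → ℝ} {v : Fin n → I → ℝ} (hprice : ∀ k, ∀ t ∈ A k, ω k * v k t = price ω v t) :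
    welfare ω v A = ∑ t, price ω v t := by
  rw [← hA.sum_bval_eq_sum]
  simp only [welfare, bval, mul_sum]
  exact sum_congr rfl fun k _ ↦ sum_congr rfl (hprice k)

lemma IsAlloc.holdsTopBundle [Finite I] {A : Fin n → Finset I} (hA : IsAlloc A) {ω : Fin n → ℝ}
    {v : Fin n → I → ℝ} (hprice : ∀ k, ∀ t ∈ A k, ω k * v k t = price ω v t) {i : Fin n}
    (hi : ∀ j, bval (price ω v) (A j) ≤ bval (price ω v) (A i)) : HoldsTopBundle ω v i := by
  cases nonempty_fintype I
  refine ⟨A, hA, fun B hB ↦ ?_, hi⟩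
  exact (hB.welfare_le_sum_price ω v).trans_eq (hA.welfare_eq_sum_price hprice).symm

lemma IsAlloc.exists_bval_lt [Fintype I] {A : Fin n → Finset I} (hA : IsAlloc A) {p : I → ℝ}
    {δ : ℝ} (hδ : 0 ≤ δ) (hlower : ∀ t, -δ ≤ p t) {i : Fin n} (hupper : ∀ t ∈ A i, p t ≤ δ) {t₀ : I}
    (ht₀ : t₀ ∉ A i) (hlarge : (Fintype.card I - 1) * δ < p t₀) :
    ∃ j, bval p (A i) < bval p (A j) := by
  classical
  obtain ⟨j, hj, -⟩ := hA t₀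
  have hdisj : Disjoint (A i) ((A j).erase t₀) := disjoint_left.2 fun t hti htj ↦
    ht₀ ((hA t).unique hti (mem_of_mem_erase htj) ▸ hj)
  have hcard : (#(A i) + #((A j).erase t₀) : ℝ) ≤ Fintype.card I - 1 := by
    have hsub : A i ∪ (A j).erase t₀ ⊆ univ.erase t₀ := union_subset
      (subset_erase.2 ⟨subset_univ _, ht₀⟩) (erase_subset_erase _ (subset_univ _))
    have hle := card_le_card hsub
    rw [card_union_of_disjoint hdisj] at hle
    rw [le_sub_iff_add_le, ← card_univ, ← card_erase_add_one (mem_univ t₀)]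
    exact_mod_cast Nat.succ_le_succ hle
  refine ⟨j, ?_⟩
  calc
    bval p (A i) ≤ #(A i) * δ := by
      simpa only [nsmul_eq_mul] using! sum_le_card_nsmul _ _ _ hupper
    _ ≤ (Fintype.card I - 1) * δ - #((A j).erase t₀) * δ := by
      rw [← sub_mul]
      gcongr
      linarith
    _ < p t₀ - #((A j).erase t₀) * δ := by gcongr
    _ = p t₀ + #((A j).erase t₀) * -δ := by ring
    _ ≤ p t₀ + ∑ t ∈ (A j).erase t₀, p t := by
      gcongr
      simpa only [nsmul_eq_mul] using card_nsmul_le_sum _ _ _ fun t _ ↦ hlower t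
    _ = bval p (A j) := add_sum_erase _ _ hj

lemma exists_pos_holdsTopBundle [NeZero n] [Fintype I] [Nontrivial I] {v : Fin n → I → ℝ}
    {V η c : ℝ} (hη : 0 ≤ η) (hV : ∀ i t, |v i t| ≤ V) {t₀ : I} (ht₀ : ∀ i, c ≤ v i t₀)
    (hc : (Fintype.card I - 1) * (η * V) < (1 / n + η) * c) {w : Fin n → ℝ}
    (hw : w ∈ stdSimplex ℝ (Fin n)) :
    ∃ i, 0 < w i ∧ HoldsTopBundle (fun k ↦ w k + η) v i := by
  let ω (k : Fin n) : ℝ := w k + η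
  obtain ⟨A, hA, hprice⟩ := exists_isAlloc_forall_eq_price ω v
  obtain ⟨i, -, hi⟩ := exists_max_image univ (fun k ↦ bval (price ω v) (A k)) univ_nonempty
  refine ⟨i, (hw.1 i).lt_of_ne' fun hwi ↦ ?_, hA.holdsTopBundle hprice fun j ↦ hi j (mem_univ j)⟩
  have hbound (t) : |ω i * v i t| ≤ η * V := by
    rw [show ω i = η by simp [ω, hwi], abs_mul, abs_of_nonneg hη]
    exact mul_le_mul_of_nonneg_left (hV i t) hη
  have hδ : 0 ≤ η * V := (abs_nonneg _).trans (hbound t₀)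
  have hcard : (1 : ℝ) ≤ Fintype.card I - 1 := by
    have : (2 : ℝ) ≤ Fintype.card I := by exact_mod_cast Fintype.one_lt_card (α := I)
    linarith
  have hlarge : (Fintype.card I - 1) * (η * V) < price ω v t₀ := by
    have hpos : 0 < (1 / n + η) * c := (mul_nonneg (by linarith) hδ).trans_lt hc
    have hc_nonneg : 0 ≤ c := (pos_of_mul_pos_right hpos (by positivity)).le
    exact hc.trans_le (one_div_add_mul_le_price hw hη hc_nonneg ht₀)
  have hupper (t) (ht : t ∈ A i) : price ω v t ≤ η * V :=
    hprice i t ht ▸ (le_abs_self _).trans (hbound t)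
  have hnot : t₀ ∉ A i := fun hmem ↦
    (hupper t₀ hmem).not_gt ((le_mul_of_one_le_left hδ hcard).trans_lt hlarge)
  obtain ⟨j, hj⟩ := hA.exists_bval_lt hδ
    (fun t ↦ (abs_le.1 (hbound t)).1.trans (le_price ω v i t)) hupper hnot hlarge
  exact (hi j (mem_univ j)).not_gt hj

theorem stmt15_general [NeZero n] [Fintype I] [Nontrivial I] {v : Fin n → I → ℝ}
    {V η c : ℝ} (hη : 0 ≤ η) (hV : ∀ i t, |v i t| ≤ V) {t₀ : I} (ht₀ : ∀ i, c ≤ v i t₀)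
    (hc : (Fintype.card I - 1) * (η * V) < (1 / n + η) * c) :
    ∃ w ∈ stdSimplex ℝ (Fin n), ∀ i, HoldsTopBundle (fun k ↦ w k + η) v i :=
  kkm_exists_mem_stdSimplex_forall_mem
    (fun i ↦ (isClosed_setOf_holdsTopBundle v i).preimage
      (f := fun (w : Fin n → ℝ) k ↦ w k + η) (by fun_prop))
    fun _ ↦ exists_pos_holdsTopBundle hη hV ht₀ hc

end FairDivision

/-- KKM application: there is a weight vector `w*` in the simplex
such that every agent `i` has an allocation maximizing the `(w*+η)`-weighted
welfare in which `i` holds a highest-priced bundle, with prices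
`p j = max_k (w* k + η) * v̄ k j`. -/
theorem stmt15 (n m : ℕ) (hn : 0 < n) (hm : 2 ≤ m)
    (vb : Fin n → Fin (m+1) → ℝ) (lam V η : ℝ) (hlam : 0 < lam)
    (G C G0 : Finset (Fin (m+1)))
    (hcover : ∀ j, j ∈ G ∨ j ∈ C ∨ j ∈ G0)
    (hGC : Disjoint G C) (hGG0 : Disjoint G G0) (hCG0 : Disjoint C G0)
    (hGgood : ∀ j ∈ G, ∀ i, 0 < vb i j)
    (hCchore : ∀ j ∈ C, ∀ i, vb i j < 0)
    (hG0 : ∀ j ∈ G0, (∀ i, 0 ≤ vb i j) ∧ (∃ a, 0 < vb a j) ∧ (∃ b, vb b j = 0))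
    (hlast : ∀ i, vb i (Fin.last m) = lam / 2)
    (hGlb : ∀ j ∈ G, ∀ i, lam / 2 ≤ vb i j)
    (hCub : ∀ j ∈ C, ∀ i, vb i j ≤ -(lam / 2))
    (hV : 0 < V) (hVub : ∀ i j, |vb i j| ≤ V) (hVmem : ∃ i j, |vb i j| = V)
    (hη : η = lam / (2 * m * n * V)) :
    ∃ w ∈ stdSimplex ℝ (Fin n), ∀ i : Fin n,
      ∃ A : Fin n → Finset (Fin (m+1)), IsAlloc A ∧
        (∀ B : Fin n → Finset (Fin (m+1)), IsAlloc B →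
          ∑ k, (w k + η) * bval (vb k) (B k) ≤ ∑ k, (w k + η) * bval (vb k) (A k)) ∧
        ∀ j : Fin n,
          (∑ t ∈ A j, ⨆ k, (w k + η) * vb k t) ≤ ∑ t ∈ A i, ⨆ k, (w k + η) * vb k t := by
  have : NeZero n := ⟨hn.ne'⟩
  have : Nontrivial (Fin (m + 1)) := Fin.nontrivial_iff_two_le.2 (by omega)
  have : 0 < m := by omega
  have hη_pos : 0 < η := hη ▸ by positivity
  refine stmt15_general hη_pos.le hVub (fun i ↦ (hlast i).ge) ?_
  calc
    ((Fintype.card (Fin (m + 1)) : ℝ) - 1) * (η * V) = 1 / n * (lam / 2) := by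
      rw [hη, Fintype.card_fin, Nat.cast_succ, add_sub_cancel_right]
      field_simp
    _ < (1 / n + η) * (lam / 2) := by
      gcongr
      exact lt_add_of_pos_right _ hη_pos
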